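/- arXiv:2405.07999 — 4 statements merged into one kernel-verified Lean document; each statement's English description precedes it below -/
import Mathlib

section
/- Let C be a nonempty closed bounded convex subset of a real Hilbert space H, b ≥ 0, and T : C → C a b-enriched nonexpansive mapping, i.e. ‖b(x−y) + Tx − Ty‖ ≤ (b+1)‖x−y‖ for all x, y ∈ C. Then T has at least one fixed point in C. -/
/-!
If `T` is `b`-enriched nonexpansive with `b ≥ 0`, then `(b + 1)⁻¹ (b I + T)` is nonexpansive and has
the same fixed points as `T`; if `b ≤ 0`, then `T` itself is nonexpansive. It remains to find a
fixed point of a nonexpansive map `S` (Browder). Fix `u ∈ C`. For `r > 0` the contraction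
`x ↦ (r + 1)⁻¹ (r u + S x)` has a fixed point `x_r`, so `x_r - S x_r = r (u - x_r)`. As `r`
decreases, monotonicity of `I - S` shows that `x_r` moves away from `u` at an obtuse angle, so
`‖x_r - x_s‖² ≤ ‖x_s - u‖² - ‖x_r - u‖²` for `s < r`. The right-hand side is an increment of a
bounded monotone function, hence `x_r` converges as `r → 0`, and the limit is fixed by `S`.
-/

open Filter Function Topology
open scoped NNReal RealInnerProductSpace

theorem cauchySeq_of_dist_sq_le_sub {α ι : Type*} [PseudoMetricSpace α] [Nonempty ι]
    [SemilatticeSup ι] {x : ι → α} {f : ι → ℝ} (hf : BddAbove (Set.range f))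
    (h : ∀ m n, m < n → dist (x m) (x n) ^ 2 ≤ f n - f m) : CauchySeq x := by
  have hmono : Monotone f := monotone_iff_forall_lt.2 fun m n hmn =>
    sub_nonneg.1 ((sq_nonneg _).trans (h m n hmn))
  have hcau : CauchySeq f := (tendsto_atTop_ciSup hmono hf).cauchySeq
  rw [Metric.cauchySeq_iff'] at hcau ⊢
  intro ε hε
  obtain ⟨N, hN⟩ := hcau (ε ^ 2) (by positivity)
  refine ⟨N, fun n hn => ?_⟩
  rcases hn.eq_or_lt with rfl | hlt
  · simpa only [dist_self] using hε
  · rw [dist_comm]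
    refine lt_of_pow_lt_pow_left₀ 2 hε.le ?_
    calc dist (x N) (x n) ^ 2 ≤ f n - f N := h N n hlt
      _ ≤ dist (f n) (f N) := le_abs_self _
      _ < ε ^ 2 := hN n hn

section WeightedAverage

variable {E : Type*} [AddCommGroup E] [Module ℝ E] {C : Set E}

/-- The average `(r + 1)⁻¹ (r f + g)` of two self-maps of a convex set. It is Krasnoselskii's
averaged map of `g` when `f = id`, and Browder's approximation of `g` when `f` is constant. -/
noncomputable def weightedAverage (hC : Convex ℝ C) (r : ℝ≥0) (f g : C → C) : C → C := fun x =>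
  ⟨(r / (r + 1) : ℝ) • (f x : E) + (1 / (r + 1) : ℝ) • (g x : E),
    hC (f x).2 (g x).2 (by positivity) (by positivity) (by field_simp)⟩

variable {hC : Convex ℝ C} {r : ℝ≥0} {f g : C → C}

theorem add_one_smul_weightedAverage (x : C) :
    (r + 1 : ℝ) • (weightedAverage hC r f g x : E) = (r : ℝ) • (f x : E) + g x := by
  have hr : (r + 1 : ℝ) ≠ 0 := by positivity
  simp only [weightedAverage, smul_add, smul_smul, mul_div_cancel₀ _ hr, one_smul]

theorem isFixedPt_weightedAverage_iff {x : C} :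
    IsFixedPt (weightedAverage hC r f g) x ↔ (x : E) - g x = (r : ℝ) • ((f x : E) - x) := by
  have hr : (r + 1 : ℝ) ≠ 0 := by positivity
  rw [IsFixedPt, Subtype.ext_iff, ← smul_right_inj hr, add_one_smul_weightedAverage, add_smul,
    one_smul, smul_sub, sub_eq_sub_iff_add_eq_add, add_comm (x : E), eq_comm]

theorem isFixedPt_weightedAverage_id_iff {x : C} :
    IsFixedPt (weightedAverage hC r id g) x ↔ IsFixedPt g x := by
  rw [isFixedPt_weightedAverage_iff, id, sub_self, smul_zero, sub_eq_zero, IsFixedPt,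
    Subtype.ext_iff, eq_comm]

end WeightedAverage

theorem lipschitzWith_weightedAverage {E : Type*} [SeminormedAddCommGroup E] [NormedSpace ℝ E]
    {C : Set E} {hC : Convex ℝ C} {r : ℝ≥0} {f g : C → C} {K : ℝ≥0}
    (h : ∀ x y : C, ‖(r : ℝ) • ((f x : E) - f y) + ((g x : E) - g y)‖ ≤ K * ‖(x : E) - y‖) :
    LipschitzWith (K / (r + 1)) (weightedAverage hC r f g) := by
  refine LipschitzWith.of_dist_le_mul fun x y => ?_
  have hr : (0 : ℝ) < r + 1 := by positivity
  rw [Subtype.dist_eq, Subtype.dist_eq, dist_eq_norm, dist_eq_norm, NNReal.coe_div, NNReal.coe_add,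
    NNReal.coe_one, div_mul_eq_mul_div, le_div_iff₀' hr]
  calc (r + 1 : ℝ) * ‖(weightedAverage hC r f g x : E) - weightedAverage hC r f g y‖
      = ‖(r : ℝ) • ((f x : E) - f y) + ((g x : E) - g y)‖ := by
        rw [← norm_smul_of_nonneg hr.le, smul_sub, add_one_smul_weightedAverage,
          add_one_smul_weightedAverage, add_sub_add_comm, smul_sub]
    _ ≤ K * ‖(x : E) - y‖ := h x y

theorem exists_sub_eq_smul_sub_of_lipschitzWith_one {E : Type*} [NormedAddCommGroup E]
    [NormedSpace ℝ E] {C : Set E} (hC : Convex ℝ C) (hcomp : IsComplete C) {S : C → C}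
    (hS : LipschitzWith 1 S) (u : C) {r : ℝ} (hr : 0 < r) :
    ∃ x : C, (x : E) - S x = r • ((u : E) - x) := by
  lift r to ℝ≥0 using hr.le
  have : CompleteSpace C := hcomp.completeSpace_coe
  have : Nonempty C := ⟨u⟩
  have hlip : LipschitzWith (1 / (r + 1)) (weightedAverage hC r (fun _ => u) S) :=
    lipschitzWith_weightedAverage fun x y => by
      simpa [Subtype.dist_eq, dist_eq_norm] using hS.dist_le_mul x y
  have hcontr : ContractingWith (1 / (r + 1)) (weightedAverage hC r (fun _ => u) S) :=
    ⟨(div_lt_one (by positivity)).2 (lt_add_of_pos_left 1 (NNReal.coe_pos.1 hr)), hlip⟩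
  exact ⟨_, isFixedPt_weightedAverage_iff.1 hcontr.fixedPoint_isFixedPt⟩

section Monotonicity

variable {H : Type*} [SeminormedAddCommGroup H] [InnerProductSpace ℝ H]

theorem inner_sub_sub_sub_nonneg_of_norm_sub_le {x y x' y' : H} (h : ‖x' - y'‖ ≤ ‖x - y‖) :
    0 ≤ ⟪(x - x') - (y - y'), x - y⟫ := by
  rw [sub_sub_sub_comm, inner_sub_left, sub_nonneg, real_inner_self_eq_norm_mul_norm]
  exact (real_inner_le_norm _ _).trans (mul_le_mul_of_nonneg_right h (norm_nonneg _))

theorem inner_sub_nonneg_of_inner_smul_sub_smul_nonneg {p q : H} {r s : ℝ} (hs : 0 ≤ s)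
    (hsr : s < r) (h : 0 ≤ ⟪s • q - r • p, p - q⟫) : 0 ≤ ⟪p, q - p⟫ := by
  have hexpand : ⟪s • q - r • p, p - q⟫ = (r - s) * ⟪p, q - p⟫ - s * ‖q - p‖ ^ 2 := by
    rw [← real_inner_self_eq_norm_sq]
    simp only [inner_sub_left, inner_sub_right, real_inner_smul_left]
    ring
  have hprod : 0 ≤ (r - s) * ⟪p, q - p⟫ := by
    linarith [mul_nonneg hs (sq_nonneg ‖q - p‖)]
  exact nonneg_of_mul_nonneg_right hprod (sub_pos.2 hsr)

theorem norm_sub_sq_le_of_inner_sub_nonneg {p q : H} (h : 0 ≤ ⟪p, q - p⟫) :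
    ‖p - q‖ ^ 2 ≤ ‖q‖ ^ 2 - ‖p‖ ^ 2 := by
  have hq := norm_add_sq_real p (q - p)
  rw [add_sub_cancel, norm_sub_rev] at hq
  linarith

theorem norm_sub_sq_le_of_sub_eq_smul_sub {x y x' y' u : H} {r s : ℝ} (hs : 0 ≤ s) (hsr : s < r)
    (hx : x - x' = r • (u - x)) (hy : y - y' = s • (u - y)) (h : ‖x' - y'‖ ≤ ‖x - y‖) :
    ‖x - y‖ ^ 2 ≤ ‖y - u‖ ^ 2 - ‖x - u‖ ^ 2 := by
  have hmono : 0 ≤ ⟪s • (y - u) - r • (x - u), (x - u) - (y - u)⟫ := by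
    convert inner_sub_sub_sub_nonneg_of_norm_sub_le h using 2
    · rw [hx, hy]
      module
    · abel
  simpa only [sub_sub_sub_cancel_right] using norm_sub_sq_le_of_inner_sub_nonneg
    (inner_sub_nonneg_of_inner_smul_sub_smul_nonneg hs hsr hmono)

end Monotonicity

/-- **Browder's fixed point theorem** in inner product spaces. -/
theorem exists_isFixedPt_of_lipschitzWith_one {H : Type*} [NormedAddCommGroup H]
    [InnerProductSpace ℝ H] {C : Set H} (hne : C.Nonempty) (hcomp : IsComplete C)
    (hbdd : Bornology.IsBounded C) (hC : Convex ℝ C) {S : C → C} (hS : LipschitzWith 1 S) :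
    ∃ x, IsFixedPt S x := by
  have : CompleteSpace C := hcomp.completeSpace_coe
  obtain ⟨u, hu⟩ := hne
  choose x hx using fun n : ℕ => exists_sub_eq_smul_sub_of_lipschitzWith_one hC hcomp hS ⟨u, hu⟩
    (Nat.one_div_pos_of_nat (α := ℝ) (n := n))
  have hcau : CauchySeq x := by
    refine cauchySeq_of_dist_sq_le_sub (f := fun n => ‖(x n : H) - u‖ ^ 2) ?_ fun m n hmn => ?_
    · obtain ⟨R, hR⟩ := Metric.isBounded_iff.1 hbdd
      refine ⟨R ^ 2, Set.forall_mem_range.2 fun n => ?_⟩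
      rw [← dist_eq_norm]
      exact pow_le_pow_left₀ dist_nonneg (hR (x n).2 hu) 2
    · rw [Subtype.dist_eq, dist_eq_norm]
      refine norm_sub_sq_le_of_sub_eq_smul_sub Nat.one_div_pos_of_nat.le
        (Nat.one_div_lt_one_div hmn) (hx m) (hx n) ?_
      simpa [Subtype.dist_eq, dist_eq_norm] using hS.dist_le_mul (x m) (x n)
  obtain ⟨z, hz⟩ := cauchySeq_tendsto_of_complete hcau
  have hzH : Tendsto (fun n => (x n : H)) atTop (𝓝 z) :=
    (continuous_subtype_val.tendsto z).comp hz
  have hSz : Tendsto (fun n => (S (x n) : H)) atTop (𝓝 (S z)) :=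
    ((continuous_subtype_val.comp hS.continuous).tendsto z).comp hz
  have hzero : Tendsto (fun n => (x n : H) - S (x n)) atTop (𝓝 0) := by
    simpa only [hx, zero_smul] using
      tendsto_one_div_add_atTop_nhds_zero_nat (𝕜 := ℝ).smul (hzH.const_sub u)
  exact ⟨z, Subtype.ext (sub_eq_zero.1 (tendsto_nhds_unique (hzH.sub hSz) hzero)).symm⟩

/-- The `b`-enriched nonexpansive self-maps of a set, for any real `b`; the paper takes
`b ≥ 0`. -/
def EnrichedNonexpansive {E : Type*} [SeminormedAddCommGroup E] [NormedSpace ℝ E] {C : Set E}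
    (b : ℝ) (T : C → C) : Prop :=
  ∀ x y : C, ‖b • ((x : E) - (y : E)) + ((T x : E) - (T y : E))‖ ≤ (b + 1) * ‖(x : E) - (y : E)‖

namespace EnrichedNonexpansive

variable {E : Type*} [SeminormedAddCommGroup E] [NormedSpace ℝ E] {C : Set E} {T : C → C}

theorem lipschitzWith_one_of_nonpos {b : ℝ} (hT : EnrichedNonexpansive b T) (hb : b ≤ 0) :
    LipschitzWith 1 T := by
  refine LipschitzWith.of_dist_le_mul fun x y => ?_
  rw [NNReal.coe_one, one_mul, Subtype.dist_eq, Subtype.dist_eq, dist_eq_norm, dist_eq_norm]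
  calc ‖(T x : E) - T y‖
      = ‖b • ((x : E) - y) + ((T x : E) - T y) - b • ((x : E) - y)‖ := by
        rw [add_sub_cancel_left]
    _ ≤ ‖b • ((x : E) - y) + ((T x : E) - T y)‖ + ‖b • ((x : E) - y)‖ := norm_sub_le _ _
    _ ≤ (b + 1) * ‖(x : E) - y‖ + -b * ‖(x : E) - y‖ := by
        rw [norm_smul, Real.norm_of_nonpos hb]
        gcongr
        exact hT x y
    _ = ‖(x : E) - y‖ := by ring

theorem lipschitzWith_one_weightedAverage_id {b : ℝ≥0} (hT : EnrichedNonexpansive (b : ℝ) T)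
    (hC : Convex ℝ C) : LipschitzWith 1 (weightedAverage hC b id T) := by
  have hlip : LipschitzWith ((b + 1) / (b + 1)) (weightedAverage hC b id T) :=
    lipschitzWith_weightedAverage hT
  rwa [div_self (by positivity)] at hlip

end EnrichedNonexpansive

theorem enriched_nonexpansive_has_fixedPoint_general
    {H : Type*} [NormedAddCommGroup H] [InnerProductSpace ℝ H]
    (C : Set H) (hne : C.Nonempty) (hcomp : IsComplete C)
    (hbdd : Bornology.IsBounded C) (hC : Convex ℝ C)
    (b : ℝ) (T : C → C) (hT : EnrichedNonexpansive b T) :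
    ∃ x : C, T x = x := by
  rcases le_total b 0 with hb | hb
  · exact exists_isFixedPt_of_lipschitzWith_one hne hcomp hbdd hC
      (hT.lipschitzWith_one_of_nonpos hb)
  · lift b to ℝ≥0 using hb
    obtain ⟨x, hx⟩ := exists_isFixedPt_of_lipschitzWith_one hne hcomp hbdd hC
      (hT.lipschitzWith_one_weightedAverage_id hC)
    exact ⟨x, isFixedPt_weightedAverage_id_iff.1 hx⟩

/-- A `b`-enriched nonexpansive self-mapping of a nonempty closed bounded convex
subset of a real Hilbert space has at least one fixed point. -/
theorem enriched_nonexpansive_has_fixedPoint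
    {H : Type*} [NormedAddCommGroup H] [InnerProductSpace ℝ H] [CompleteSpace H]
    (C : Set H) (hne : C.Nonempty) (hclosed : IsClosed C)
    (hbdd : Bornology.IsBounded C) (hconv : Convex ℝ C)
    (b : ℝ) (hb : 0 ≤ b) (T : C → C)
    (hT : ∀ x y : C, ‖b • ((x : H) - (y : H)) + ((T x : H) - (T y : H))‖ ≤
      (b + 1) * ‖(x : H) - (y : H)‖) :
    ∃ x : C, T x = x :=
  enriched_nonexpansive_has_fixedPoint_general C hne hclosed.isComplete hbdd hconv b T hT
end

section
/- Let C be a nonempty closed bounded convex subset of a real Hilbert space H and T : C → C a nonexpansive mapping, i.e. ‖Tx − Ty‖ ≤ ‖x−y‖ for all x, y ∈ C. Then T has at least one fixed point in C (the Browder–Goede–Kirk fixed point theorem). -/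
/-!
Let `x` be a bounded orbit of a nonexpansive map `T : C → C`, and let `r y = limsup ‖x n - y‖`.
Uniform convexity pushes the midpoint of two far apart near-minimizers of `r` well below them, so
minimizing sequences of `r` on `C` are Cauchy and `r` has exactly one minimizer `z` in `C`. Since
`‖x (n + 1) - T z‖ ≤ ‖x n - z‖`, also `r (T z) ≤ r z`, whence `T z = z`.
-/

open Bornology Filter Function Set Topology

section Minimizers

variable {X : Type*} {s : Set X} {f : X → ℝ}

theorem exists_isMinOn_of_forall_dist_lt [PseudoMetricSpace X] (hs : IsComplete s)
    (hne : s.Nonempty) (hf : LowerSemicontinuousOn f s) (hbdd : BddBelow (f '' s))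
    (h : ∀ ε > 0, ∃ r > sInf (f '' s), ∀ y ∈ s, ∀ z ∈ s, f y < r → f z < r → dist y z < ε) :
    ∃ z ∈ s, IsMinOn f s z := by
  obtain ⟨a, -, ha, hmem⟩ := exists_seq_tendsto_sInf (hne.image f) hbdd
  choose y hys hya using hmem
  have hlim : Tendsto (fun n => f (y n)) atTop (𝓝 (sInf (f '' s))) := by simpa only [hya] using ha
  have hcauchy : CauchySeq y := Metric.cauchySeq_iff'.2 fun ε hε => by
    obtain ⟨r, hr, hdist⟩ := h ε hε
    obtain ⟨N, hN⟩ := eventually_atTop.1 (hlim.eventually_lt_const hr)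
    exact ⟨N, fun n hn => hdist _ (hys n) _ (hys N) (hN n hn) (hN N le_rfl)⟩
  obtain ⟨z, hzs, hyz⟩ := cauchySeq_tendsto_of_isComplete hs hys hcauchy
  have hyz_within : Tendsto y atTop (𝓝[s] z) := tendsto_nhdsWithin_iff.2 ⟨hyz, .of_forall hys⟩
  have hz : f z ≤ sInf (f '' s) := le_of_forall_lt_imp_le_of_dense fun c hc =>
    ge_of_tendsto hlim ((hyz_within.eventually (hf z hzs c hc)).mono fun _ => le_of_lt)
  exact ⟨z, hzs, fun w hw => hz.trans (csInf_le hbdd (mem_image_of_mem f hw))⟩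

theorem existsUnique_isMinOn_of_forall_dist_lt [MetricSpace X] (hs : IsComplete s)
    (hne : s.Nonempty) (hf : LowerSemicontinuousOn f s) (hbdd : BddBelow (f '' s))
    (h : ∀ ε > 0, ∃ r > sInf (f '' s), ∀ y ∈ s, ∀ z ∈ s, f y < r → f z < r → dist y z < ε) :
    ∃! z, z ∈ s ∧ IsMinOn f s z := by
  obtain ⟨z, hzs, hz⟩ := exists_isMinOn_of_forall_dist_lt hs hne hf hbdd h
  refine ⟨z, ⟨hzs, hz⟩, fun w ⟨hws, hw⟩ => eq_of_forall_dist_le fun ε hε => ?_⟩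
  obtain ⟨r, hr, hdist⟩ := h ε hε
  have lt_of_isMinOn {v : X} (hv : IsMinOn f s v) : f v < r :=
    (le_csInf (hne.image f) (forall_mem_image.2 hv)).trans_lt hr
  exact (hdist w hws z hzs (lt_of_isMinOn hw) (lt_of_isMinOn hz)).le

end Minimizers

section AsymptoticRadius

/-- The asymptotic radius of the family `x` at the point `y` along the filter `l`. It is the usual
notion when `x` is bounded; otherwise the real `limsup` may take a junk value. -/
noncomputable def asymptoticRadius {X ι : Type*} [PseudoMetricSpace X] (l : Filter ι) (x : ι → X)
    (y : X) : ℝ :=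
  limsup (fun i => dist (x i) y) l

variable {X ι : Type*} [PseudoMetricSpace X] {l : Filter ι} {x : ι → X} {y : X} {r : ℝ}

theorem isBoundedUnder_le_dist (hx : IsBounded (range x)) (y : X) :
    l.IsBoundedUnder (· ≤ ·) fun i => dist (x i) y := by
  obtain ⟨R, hR⟩ := hx.subset_closedBall y
  exact isBoundedUnder_of ⟨R, fun i => hR (mem_range_self i)⟩

theorem isCoboundedUnder_le_dist [l.NeBot] (x : ι → X) (y : X) :
    l.IsCoboundedUnder (· ≤ ·) fun i => dist (x i) y :=
  (isBoundedUnder_of ⟨0, fun _ => dist_nonneg⟩ :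
    l.IsBoundedUnder (· ≥ ·) fun i => dist (x i) y).isCoboundedUnder_le

theorem eventually_dist_lt_of_asymptoticRadius_lt (hx : IsBounded (range x))
    (h : asymptoticRadius l x y < r) : ∀ᶠ i in l, dist (x i) y < r :=
  eventually_lt_of_limsup_lt h (isBoundedUnder_le_dist hx y)

theorem asymptoticRadius_le_of_eventually_dist_le [l.NeBot] (h : ∀ᶠ i in l, dist (x i) y ≤ r) :
    asymptoticRadius l x y ≤ r :=
  limsup_le_of_le (isCoboundedUnder_le_dist x y) h

theorem asymptoticRadius_nonneg [l.NeBot] (hx : IsBounded (range x)) (y : X) :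
    0 ≤ asymptoticRadius l x y :=
  le_limsup_of_frequently_le (.of_forall fun _ => dist_nonneg) (isBoundedUnder_le_dist hx y)

theorem bddBelow_asymptoticRadius_image [l.NeBot] (hx : IsBounded (range x)) (s : Set X) :
    BddBelow (asymptoticRadius l x '' s) :=
  ⟨0, forall_mem_image.2 fun y _ => asymptoticRadius_nonneg hx y⟩

theorem asymptoticRadius_le_add_dist [l.NeBot] (hx : IsBounded (range x)) (y z : X) :
    asymptoticRadius l x y ≤ asymptoticRadius l x z + dist y z := by
  refine le_of_forall_pos_le_add fun ε hε => asymptoticRadius_le_of_eventually_dist_le ?_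
  filter_upwards [eventually_dist_lt_of_asymptoticRadius_lt hx
    (lt_add_of_pos_right (asymptoticRadius l x z) hε)] with i hi
  linarith [dist_triangle_right (x i) y z]

theorem lipschitzWith_asymptoticRadius [l.NeBot] (hx : IsBounded (range x)) :
    LipschitzWith 1 (asymptoticRadius l x) :=
  .of_le_add (asymptoticRadius_le_add_dist hx)

theorem asymptoticRadius_comp_le {Y : Type*} [PseudoMetricSpace Y] [l.NeBot] {T : X → Y}
    (hT : LipschitzWith 1 T) (hx : IsBounded (range x)) (y : X) :
    asymptoticRadius l (T ∘ x) (T y) ≤ asymptoticRadius l x y :=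
  limsup_le_limsup (.of_forall fun i => by simpa using hT.dist_le_mul (x i) y)
    (isCoboundedUnder_le_dist (T ∘ x) (T y)) (isBoundedUnder_le_dist hx y)

theorem asymptoticRadius_iterate_le {T : X → X} (hT : LipschitzWith 1 T) {x₀ : X}
    (hx : IsBounded (range fun n => T^[n] x₀)) (y : X) :
    asymptoticRadius atTop (fun n => T^[n] x₀) (T y) ≤
      asymptoticRadius atTop (fun n => T^[n] x₀) y :=
  calc
    asymptoticRadius atTop (fun n => T^[n] x₀) (T y)
      = asymptoticRadius atTop (fun n => T^[n + 1] x₀) (T y) :=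
        (limsup_nat_add (fun n => dist (T^[n] x₀) (T y)) 1).symm
    _ = asymptoticRadius atTop (T ∘ fun n => T^[n] x₀) (T y) := by
        simp only [iterate_succ_apply', comp_def]
    _ ≤ asymptoticRadius atTop (fun n => T^[n] x₀) y := asymptoticRadius_comp_le hT hx y

end AsymptoticRadius

section UniformConvexity

variable (E : Type*) [SeminormedAddCommGroup E] [NormedSpace ℝ E] [UniformConvexSpace E]

theorem exists_forall_le_norm_add_le_two_mul_sub {ε : ℝ} (hε : 0 < ε) (R : ℝ) :
    ∃ δ > 0, ∀ r ≤ R, ∀ x y : E, ‖x‖ ≤ r → ‖y‖ ≤ r → ε ≤ ‖x - y‖ → ‖x + y‖ ≤ 2 * r - δ := by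
  have hR : 0 < max R 1 := by positivity
  obtain ⟨δ, hδ, h⟩ := exists_forall_closed_ball_dist_add_le_two_sub E (div_pos hε hR)
  refine ⟨ε / 2 * δ, by positivity, fun r hrR x y hx hy hxy => ?_⟩
  have hεr : ε / 2 ≤ r := by linarith [norm_sub_le x y]
  have hr : 0 < r := (half_pos hε).trans_le hεr
  have norm_inv_smul (v : E) : ‖r⁻¹ • v‖ = ‖v‖ / r := by
    rw [norm_smul_of_nonneg (inv_nonneg.2 hr.le), inv_mul_eq_div]
  have hscaled : ‖x + y‖ / r ≤ 2 - δ := by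
    rw [← norm_inv_smul, smul_add]
    refine h ?_ ?_ ?_
    · rwa [norm_inv_smul, div_le_one hr]
    · rwa [norm_inv_smul, div_le_one hr]
    · rw [← smul_sub, norm_inv_smul]
      exact div_le_div₀ (norm_nonneg _) hxy hr (hrR.trans (le_max_left R 1))
  calc
    ‖x + y‖ ≤ (2 - δ) * r := (div_le_iff₀ hr).1 hscaled
    _ = 2 * r - r * δ := by ring
    _ ≤ 2 * r - ε / 2 * δ := by gcongr

variable {E} {ι : Type*} {C : Set E} {l : Filter ι} [l.NeBot] {x : ι → E}

theorem exists_forall_asymptoticRadius_midpoint_le (hx : IsBounded (range x)) {ε : ℝ} (hε : 0 < ε)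
    (R : ℝ) :
    ∃ δ > 0, ∀ r ≤ R, ∀ y z : E, asymptoticRadius l x y < r → asymptoticRadius l x z < r →
      ε ≤ dist y z → asymptoticRadius l x (midpoint ℝ y z) ≤ r - δ := by
  obtain ⟨δ, hδ, h⟩ := exists_forall_le_norm_add_le_two_mul_sub E hε R
  refine ⟨δ / 2, half_pos hδ, fun r hr y z hy hz hyz =>
    asymptoticRadius_le_of_eventually_dist_le ?_⟩
  filter_upwards [eventually_dist_lt_of_asymptoticRadius_lt hx hy,
    eventually_dist_lt_of_asymptoticRadius_lt hx hz] with i hiy hiz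
  rw [dist_eq_norm] at hiy hiz
  have hsep : ε ≤ ‖(x i - y) - (x i - z)‖ := by
    rwa [sub_sub_sub_cancel_left, ← dist_eq_norm, dist_comm]
  have hsum : ‖(x i - y) + (x i - z)‖ ≤ 2 * r - δ := h r hr _ _ hiy.le hiz.le hsep
  calc
    dist (x i) (midpoint ℝ y z) = ‖(2⁻¹ : ℝ) • ((x i - y) + (x i - z))‖ := by
      rw [dist_eq_norm, midpoint_eq_smul_add, invOf_eq_inv]
      congr 1
      module
    _ = 2⁻¹ * ‖(x i - y) + (x i - z)‖ := norm_smul_of_nonneg (by norm_num) _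
    _ ≤ r - δ / 2 := by linarith

theorem exists_forall_dist_lt_of_asymptoticRadius_lt (hconv : Convex ℝ C)
    (hx : IsBounded (range x)) {ε : ℝ} (hε : 0 < ε) :
    ∃ r > sInf (asymptoticRadius l x '' C), ∀ y ∈ C, ∀ z ∈ C,
      asymptoticRadius l x y < r → asymptoticRadius l x z < r → dist y z < ε := by
  set ρ := sInf (asymptoticRadius l x '' C)
  obtain ⟨δ, hδ, h⟩ := exists_forall_asymptoticRadius_midpoint_le (l := l) hx hε (ρ + 1)
  refine ⟨ρ + min 1 (δ / 2), by simp [hδ], fun y hy z hz hry hrz => ?_⟩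
  by_contra! hyz
  have hlower : ρ ≤ asymptoticRadius l x (midpoint ℝ y z) :=
    csInf_le (bddBelow_asymptoticRadius_image hx C) (mem_image_of_mem _ (hconv.midpoint_mem hy hz))
  have hupper := h _ (by gcongr; exact min_le_left _ _) y z hry hrz hyz
  linarith [min_le_right 1 (δ / 2)]

end UniformConvexity

theorem existsUnique_isMinOn_asymptoticRadius {E ι : Type*} [NormedAddCommGroup E]
    [NormedSpace ℝ E] [UniformConvexSpace E] {C : Set E} {l : Filter ι} [l.NeBot] {x : ι → E}
    (hC : IsComplete C) (hne : C.Nonempty) (hconv : Convex ℝ C)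
    (hx : IsBounded (range x)) : ∃! z, z ∈ C ∧ IsMinOn (asymptoticRadius l x) C z :=
  existsUnique_isMinOn_of_forall_dist_lt hC hne
    ((lipschitzWith_asymptoticRadius hx).continuous.lowerSemicontinuous.lowerSemicontinuousOn C)
    (bddBelow_asymptoticRadius_image hx C)
    fun _ hε => exists_forall_dist_lt_of_asymptoticRadius_lt hconv hx hε

theorem browder_goede_kirk_general
    {E : Type*} [NormedAddCommGroup E] [NormedSpace ℝ E] [UniformConvexSpace E]
    {C : Set E} (hC : IsComplete C) (hconv : Convex ℝ C)
    {T : C → C} (hT : LipschitzWith 1 T)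
    {x₀ : C} (hx₀ : IsBounded (range fun n => T^[n] x₀)) :
    ∃ x : C, T x = x := by
  have hx : IsBounded (range fun n => (T^[n] x₀ : E)) := by
    rw [range_comp']
    exact isBounded_image_subtype_val.2 hx₀
  obtain ⟨z, ⟨hzC, hz⟩, huniq⟩ :=
    existsUnique_isMinOn_asymptoticRadius (l := atTop) hC ⟨x₀, x₀.2⟩ hconv hx
  lift z to C using hzC
  have hTz : IsMinOn (asymptoticRadius atTop fun n => (T^[n] x₀ : E)) C (T z) := fun w hw =>
    (asymptoticRadius_iterate_le hT hx₀ z).trans (hz hw)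
  exact ⟨z, Subtype.ext (huniq (T z) ⟨(T z).2, hTz⟩)⟩

/-- Browder–Goede–Kirk: a nonexpansive self-mapping of a nonempty closed bounded
convex subset of a real Hilbert space has at least one fixed point. -/
theorem browder_goede_kirk
    {H : Type*} [NormedAddCommGroup H] [InnerProductSpace ℝ H] [CompleteSpace H]
    (C : Set H) (hne : C.Nonempty) (hclosed : IsClosed C)
    (hbdd : Bornology.IsBounded C) (hconv : Convex ℝ C)
    (T : C → C)
    (hT : ∀ x y : C, ‖(T x : H) - (T y : H)‖ ≤ ‖(x : H) - (y : H)‖) :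
    ∃ x : C, T x = x := by
  have hlip : LipschitzWith 1 T := .mk_one fun x y => by
    simpa only [Subtype.dist_eq, dist_eq_norm] using hT x y
  obtain ⟨x₀, hx₀⟩ := hne
  exact browder_goede_kirk_general (x₀ := ⟨x₀, hx₀⟩) hclosed.isComplete hconv hlip
    (isBounded_image_subtype_val.1 (hbdd.subset (Subtype.coe_image_subset C _)))
end

section
/- Let X be a real normed space, b > 0, and T : X → X a b-modified enriched nonexpansive mapping, i.e. ‖b(x−y) + Tx − Ty‖ ≤ ‖x−y‖ for all x, y ∈ X. Set λ = 1/(b+1) and define T_λ x = (1−λ)x + λTx. Then ‖T_λ x − T_λ y‖ ≤ λ‖x−y‖ for all x, y ∈ X; in particular, T_λ is a Banach contraction with contraction constant λ ∈ (0,1). -/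
/-!
A map `T` is `b`-modified enriched nonexpansive exactly when `S x = b • x + T x` is nonexpansive.
For `λ = 1 / (b + 1)` one has `1 - λ = λ * b`, so the averaged map is `T_λ = λ • S`: a nonexpansive
map followed by the scaling by `λ`.
-/

section Definitions

variable {𝕜 X : Type*}

/-- `T` is `b`-modified enriched nonexpansive, with `b` a scalar of an arbitrary normed field: the
hypothesis that bounds the Lipschitz constant of the averaged mapping with parameter
`1 / (b + 1)`. -/
def IsModifiedEnrichedNonexpansive [NormedField 𝕜] [SeminormedAddCommGroup X] [NormedSpace 𝕜 X]
    (b : 𝕜) (T : X → X) : Prop :=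
  ∀ x y, ‖b • (x - y) + (T x - T y)‖ ≤ ‖x - y‖

/-- The averaged mapping `T_c` of `T`, the candidate contraction. The parameter `c` ranges over all
scalars, so `averagedMap c T x` need not be a convex combination of `x` and `T x`. -/
def averagedMap [Ring 𝕜] [AddCommGroup X] [Module 𝕜 X] (c : 𝕜) (T : X → X) (x : X) : X :=
  (1 - c) • x + c • T x

end Definitions

theorem averagedMap_one_div_add_one {𝕜 X : Type*} [Field 𝕜] [AddCommGroup X] [Module 𝕜 X] {b : 𝕜}
    (hb : b + 1 ≠ 0) (T : X → X) :
    averagedMap (1 / (b + 1)) T = fun x ↦ (1 / (b + 1)) • (b • x + T x) := by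
  have one_sub_one_div : 1 - 1 / (b + 1) = 1 / (b + 1) * b := by
    field_simp
    ring
  ext x
  rw [averagedMap, one_sub_one_div, smul_add, mul_smul]

section Contraction

variable {𝕜 X : Type*} [NormedField 𝕜] [SeminormedAddCommGroup X] [NormedSpace 𝕜 X]
  {b : 𝕜} {T : X → X}

theorem isModifiedEnrichedNonexpansive_iff_lipschitzWith :
    IsModifiedEnrichedNonexpansive b T ↔ LipschitzWith 1 fun x ↦ b • x + T x := by
  simp only [IsModifiedEnrichedNonexpansive, lipschitzWith_iff_norm_sub_le, NNReal.coe_one,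
    one_mul, add_sub_add_comm, smul_sub]

theorem IsModifiedEnrichedNonexpansive.lipschitzWith_averagedMap
    (hT : IsModifiedEnrichedNonexpansive b T) (hb : b + 1 ≠ 0) :
    LipschitzWith ‖1 / (b + 1)‖₊ (averagedMap (1 / (b + 1)) T) := by
  rw [averagedMap_one_div_add_one hb]
  simpa only [mul_one, Function.comp_def] using
    (lipschitzWith_smul (1 / (b + 1))).comp (isModifiedEnrichedNonexpansive_iff_lipschitzWith.mp hT)

theorem averaged_of_modified_enriched_is_contraction_general
    (hb : 1 < ‖b + 1‖) (hT : IsModifiedEnrichedNonexpansive b T) :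
    (0 < ‖1 / (b + 1)‖ ∧ ‖1 / (b + 1)‖ < 1) ∧
      ∀ x y : X, ‖averagedMap (1 / (b + 1)) T x - averagedMap (1 / (b + 1)) T y‖ ≤
        ‖1 / (b + 1)‖ * ‖x - y‖ := by
  have hb_ne : b + 1 ≠ 0 := norm_pos_iff.mp (one_pos.trans hb)
  exact ⟨⟨norm_pos_iff.mpr (one_div_ne_zero hb_ne), by simpa using inv_lt_one_of_one_lt₀ hb⟩,
    (hT.lipschitzWith_averagedMap hb_ne).norm_sub_le⟩

end Contraction

/-- If `T` is `b`-modified enriched nonexpansive with `b > 0` and `λ = 1 / (b + 1)`,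
then the averaged map `T_λ x = (1 - λ) • x + λ • T x` is a Banach contraction with
constant `λ ∈ (0,1)`. -/
theorem averaged_of_modified_enriched_is_contraction
    {X : Type*} [NormedAddCommGroup X] [NormedSpace ℝ X]
    (b : ℝ) (hb : 0 < b) (T : X → X)
    (hT : ∀ x y : X, ‖b • (x - y) + (T x - T y)‖ ≤ ‖x - y‖)
    (lam : ℝ) (hlam : lam = 1 / (b + 1))
    (Tlam : X → X) (hTlam : ∀ x : X, Tlam x = (1 - lam) • x + lam • T x) :
    (0 < lam ∧ lam < 1) ∧ ∀ x y : X, ‖Tlam x - Tlam y‖ ≤ lam * ‖x - y‖ := by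
  have hlam_pos : 0 < lam := hlam ▸ by positivity
  simpa only [averagedMap, ← hlam, ← hTlam, Real.norm_of_nonneg hlam_pos.le] using
    averaged_of_modified_enriched_is_contraction_general
      (by linarith [Real.le_norm_self (b + 1)]) hT
end

section
/- Let X be a real Banach space, b > 0, and T : X → X a b-modified enriched nonexpansive mapping, i.e. ‖b(x−y) + Tx − Ty‖ ≤ ‖x−y‖ for all x, y ∈ X. Set λ = 1/(b+1). Then for every initial point x₀ ∈ X, the Krasnoselskii iteration defined by x_{n+1} = (1−λ)x_n + λT x_n converges (in norm) to the unique fixed point x* of T. -/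
/-!
The Krasnoselskii map `x ↦ (1 - λ) • x + λ • T x` has the same fixed points as `T` when `λ ≠ 0`.
For `λ = (b + 1)⁻¹` it equals `λ • (b • x + T x)`. If `x ↦ b • x + T x` is Lipschitz with constant
`K < ‖b + 1‖`, the Krasnoselskii map is therefore Lipschitz with constant `‖b + 1‖⁻¹ * K < 1`, and
Banach's contraction principle applies.
-/

open Filter Function Topology
open scoped NNReal

/-- The Krasnoselskii average of the identity and `T` with weight `lam` on `T`; its orbits are the
Krasnoselskii iterations associated to `T`. The weight is any scalar, not only a real number in
`(0, 1)`. -/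
def krasnoselskiiMap {R M : Type*} [Ring R] [AddCommGroup M] [Module R M] (lam : R) (T : M → M)
    (x : M) : M :=
  (1 - lam) • x + lam • T x

theorem isFixedPt_krasnoselskiiMap_iff {R M : Type*} [Ring R] [IsDomain R] [AddCommGroup M]
    [Module R M] [Module.IsTorsionFree R M] {lam : R} (hlam : lam ≠ 0) {T : M → M} {x : M} :
    IsFixedPt (krasnoselskiiMap lam T) x ↔ IsFixedPt T x := by
  have displacement : krasnoselskiiMap lam T x - x = lam • (T x - x) := by
    rw [krasnoselskiiMap, sub_smul, one_smul, smul_sub]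
    abel
  rw [IsFixedPt, IsFixedPt, ← sub_eq_zero, displacement, smul_eq_zero_iff_right hlam, sub_eq_zero]

theorem krasnoselskiiMap_inv_add_one {K M : Type*} [DivisionRing K] [AddCommGroup M] [Module K M]
    {b : K} (hb : b + 1 ≠ 0) (T : M → M) (x : M) :
    krasnoselskiiMap (b + 1)⁻¹ T x = (b + 1)⁻¹ • (b • x + T x) := by
  have weight : 1 - (b + 1)⁻¹ = (b + 1)⁻¹ * b := by
    rw [sub_eq_iff_eq_add, ← mul_add_one, inv_mul_cancel₀ hb]
  rw [krasnoselskiiMap, weight, mul_smul, smul_add]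

theorem eq_iterate_of_forall_succ_eq {α : Type*} {f : α → α} {x : ℕ → α}
    (hx : ∀ n, x (n + 1) = f (x n)) (n : ℕ) : x n = f^[n] (x 0) := by
  induction n with
  | zero => rfl
  | succ n ih => rw [hx, ih, iterate_succ_apply']

theorem lipschitzWith_smul_add_iff {R X : Type*} [SeminormedAddCommGroup X] [DistribSMul R X]
    {b : R} {T : X → X} {K : ℝ≥0} :
    LipschitzWith K (fun x ↦ b • x + T x) ↔
      ∀ x y, ‖b • (x - y) + (T x - T y)‖ ≤ K * ‖x - y‖ := by
  simp only [lipschitzWith_iff_norm_sub_le, smul_sub, add_sub_add_comm]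

theorem contractingWith_krasnoselskiiMap {𝕜 X : Type*} [NormedDivisionRing 𝕜]
    [NormedAddCommGroup X] [Module 𝕜 X] [NormSMulClass 𝕜 X] {b : 𝕜} {T : X → X} {K : ℝ≥0}
    (hK : K < ‖b + 1‖₊) (hT : LipschitzWith K (fun x ↦ b • x + T x)) :
    ContractingWith (‖(b + 1)⁻¹‖₊ * K) (krasnoselskiiMap (b + 1)⁻¹ T) := by
  have norm_pos : 0 < ‖b + 1‖₊ := pos_of_gt hK
  refine ⟨?_, ?_⟩
  · rwa [nnnorm_inv, inv_mul_lt_one₀ norm_pos]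
  · rw [funext (krasnoselskiiMap_inv_add_one (nnnorm_ne_zero_iff.mp norm_pos.ne') T)]
    exact (lipschitzWith_smul (b + 1)⁻¹).comp hT

theorem krasnoselskii_converges_to_fixedPoint_general {𝕜 X : Type*} [NormedDivisionRing 𝕜]
    [NormedAddCommGroup X] [Module 𝕜 X] [NormSMulClass 𝕜 X] [CompleteSpace X]
    {b : 𝕜} {T : X → X} {K : ℝ≥0} (hK : K < ‖b + 1‖₊)
    (hT : ∀ x y, ‖b • (x - y) + (T x - T y)‖ ≤ K * ‖x - y‖) :
    ∃ xstar, IsFixedPt T xstar ∧ (∀ y, IsFixedPt T y → y = xstar) ∧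
      ∀ x : ℕ → X, (∀ n, x (n + 1) = krasnoselskiiMap (b + 1)⁻¹ T (x n)) →
        Tendsto x atTop (𝓝 xstar) := by
  have contracting := contractingWith_krasnoselskiiMap hK (lipschitzWith_smul_add_iff.mpr hT)
  have weight_ne_zero : (b + 1)⁻¹ ≠ 0 := inv_ne_zero (nnnorm_pos.mp (pos_of_gt hK))
  have isFixedPt_iff {x : X} := isFixedPt_krasnoselskiiMap_iff weight_ne_zero (T := T) (x := x)
  refine ⟨contracting.fixedPoint _, isFixedPt_iff.mp contracting.fixedPoint_isFixedPt,
    fun y hy ↦ contracting.fixedPoint_unique (isFixedPt_iff.mpr hy), fun x hx ↦ ?_⟩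
  rw [funext (eq_iterate_of_forall_succ_eq hx)]
  exact contracting.tendsto_iterate_fixedPoint (x 0)

theorem one_lt_nnnorm_add_one {b : ℝ} (hb : 0 < b) : 1 < ‖b + 1‖₊ := by
  rw [← NNReal.coe_lt_coe, coe_nnnorm, NNReal.coe_one]
  exact (lt_add_of_pos_left 1 hb).trans_le (le_abs_self (b + 1))

/-- For a `b`-modified enriched nonexpansive mapping `T` with `b > 0` on a real
Banach space and `λ = 1 / (b + 1)`, the Krasnoselskii iteration
`x_{n+1} = (1 - λ) • x_n + λ • T x_n` converges to the unique fixed point of `T`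
for every initial point. -/
theorem krasnoselskii_converges_to_fixedPoint
    {X : Type*} [NormedAddCommGroup X] [NormedSpace ℝ X] [CompleteSpace X]
    (b : ℝ) (hb : 0 < b) (T : X → X)
    (hT : ∀ x y : X, ‖b • (x - y) + (T x - T y)‖ ≤ ‖x - y‖)
    (lam : ℝ) (hlam : lam = 1 / (b + 1)) :
    ∃ xstar : X, T xstar = xstar ∧ (∀ y : X, T y = y → y = xstar) ∧
      ∀ x : ℕ → X, (∀ n : ℕ, x (n + 1) = (1 - lam) • x n + lam • T (x n)) →
        Filter.Tendsto x Filter.atTop (nhds xstar) := by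
  rw [hlam, one_div]
  exact krasnoselskii_converges_to_fixedPoint_general (one_lt_nnnorm_add_one hb) (by simpa using hT)
end
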